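/- Let X be a strongly WCG (real or complex) Banach space. Then for every bounded set A ⊆ X there is a countable subset C ⊆ A such that ω(C') = ω(A) for every infinite subset C' ⊆ C. -/

import Mathlib

/-!
Let `K` witness that `X` is strongly WCG and put `Kₙ = ⋃_{j ≤ n} jK`, an increasing sequence of
weakly compact sets. Every weakly compact `L` lies in `Kₘ + ε B_X` for some `m`
(`exists_infDist_multiples_le`), so the sets `Kₙ` alone determine `ω`. Since `d̂(A, Kₙ) ≥ ω(A)`,
there are `aₙ ∈ A` with `dist(aₙ, Kₙ) > ω(A) - 1/(n+1)`. As the `Kₙ` increase, any infinite subset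
`C'` of `{aₙ}` satisfies `d̂(C', Kₘ) ≥ ω(A)` for every `m`, hence `ω(C') ≥ ω(A)`; the reverse
inequality is monotonicity of `ω`.

Read literally, the assertion about infinite `C' ⊆ C` holds vacuously for `C = ∅`. The theorem is
therefore deduced from `exists_countable_deBlasi_eq`, in which `C` is moreover infinite whenever
`A` is: if `ω(A) > 0`, then `{aₙ}` cannot be finite, as a finite set is weakly compact and so is
within `ω(A)/2` of some `Kₘ`; if `ω(A) = 0`, any countably infinite subset of `A` will do.
-/

open NormedSpace Metric Filter

noncomputable section

variable (𝕜 : Type*) [RCLike 𝕜] (X : Type*) [NormedAddCommGroup X] [NormedSpace 𝕜 X]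

/-- `d̂(A,B) = sup_{a ∈ A} dist(a,B)`. -/
noncomputable def supDist {E : Type*} [NormedAddCommGroup E] (A B : Set E) : ℝ :=
  ⨆ a : A, infDist (a : E) B

/-- A subset of a normed space is weakly compact if it is compact in the weak topology. -/
def IsWeaklyCompact (K : Set X) : Prop :=
  IsCompact (show Set (WeakSpace 𝕜 X) from K)

/-- The De Blasi measure of weak non-compactness:
`ω(A) = inf { d̂(A,K) : K ⊆ X weakly compact nonempty }`. -/
noncomputable def deBlasiMWNC (A : Set X) : ℝ :=
  sInf {d : ℝ | ∃ K : Set X, K.Nonempty ∧ IsWeaklyCompact 𝕜 X K ∧ d = supDist A K}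
/-- `X` is strongly weakly compactly generated: there is a weakly compact `K ⊆ X` such that
every weakly compact `L ⊆ X` satisfies `L ⊆ nK + ε B_X` for some `n`, for every `ε > 0`. -/
def StronglyWCG : Prop :=
  ∃ K : Set X, IsWeaklyCompact 𝕜 X K ∧
    ∀ L : Set X, IsWeaklyCompact 𝕜 X L → ∀ ε > (0 : ℝ),
      ∃ n : ℕ, ∀ x ∈ L, ∃ k ∈ K, ‖x - n • k‖ ≤ ε

theorem bddAbove_infDist {E : Type*} [NormedAddCommGroup E] {A K : Set E}
    (hA : Bornology.IsBounded A) (hK : K.Nonempty) :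
    BddAbove (Set.range fun a : A => infDist (a : E) K) := by
  obtain ⟨k, hk⟩ := hK
  obtain ⟨R, hR⟩ := hA.exists_norm_le
  refine ⟨R + ‖k‖, ?_⟩
  rintro _ ⟨a, rfl⟩
  have h1 : infDist (a : E) K ≤ dist (a : E) k := infDist_le_dist_of_mem hk
  have h2 := hR a a.2
  have h3 := dist_le_norm_add_norm (a : E) k
  linarith

theorem infDist_le_supDist {E : Type*} [NormedAddCommGroup E] {A K : Set E}
    (hA : Bornology.IsBounded A) (hK : K.Nonempty) {a : E} (ha : a ∈ A) :
    infDist a K ≤ supDist A K :=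
  le_ciSup (bddAbove_infDist hA hK) (⟨a, ha⟩ : A)

theorem supDist_nonneg {E : Type*} [NormedAddCommGroup E] (A K : Set E) : 0 ≤ supDist A K :=
  Real.iSup_nonneg fun _ => infDist_nonneg

theorem supDist_mono {E : Type*} [NormedAddCommGroup E] {A C K : Set E}
    (hA : Bornology.IsBounded A) (hK : K.Nonempty) (hC : C ⊆ A) : supDist C K ≤ supDist A K :=
  Real.iSup_le (fun c => infDist_le_supDist hA hK (hC c.2)) (supDist_nonneg A K)

theorem deBlasi_le_supDist (A : Set X) {K : Set X} (hK : K.Nonempty)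
    (hKc : IsWeaklyCompact 𝕜 X K) : deBlasiMWNC 𝕜 X A ≤ supDist A K := by
  refine csInf_le ⟨0, ?_⟩ ⟨K, hK, hKc, rfl⟩
  rintro _ ⟨L, -, -, rfl⟩
  exact supDist_nonneg A L

theorem isWeaklyCompact_of_finite {F : Set X} (hF : F.Finite) : IsWeaklyCompact 𝕜 X F :=
  Set.Finite.isCompact (X := WeakSpace 𝕜 X) hF

theorem le_deBlasi (A : Set X) {r : ℝ}
    (h : ∀ K : Set X, K.Nonempty → IsWeaklyCompact 𝕜 X K → r ≤ supDist A K) :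
    r ≤ deBlasiMWNC 𝕜 X A := by
  refine le_csInf ⟨_, {0}, Set.singleton_nonempty 0,
    isWeaklyCompact_of_finite 𝕜 X (Set.finite_singleton 0), rfl⟩ ?_
  rintro _ ⟨K, hK, hKc, rfl⟩
  exact h K hK hKc

theorem deBlasi_nonneg (A : Set X) : 0 ≤ deBlasiMWNC 𝕜 X A :=
  le_deBlasi 𝕜 X A fun K _ _ => supDist_nonneg A K

theorem deBlasi_mono {A C : Set X} (hA : Bornology.IsBounded A) (hC : C ⊆ A) :
    deBlasiMWNC 𝕜 X C ≤ deBlasiMWNC 𝕜 X A :=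
  le_deBlasi 𝕜 X A fun _ hK hKc =>
    (deBlasi_le_supDist 𝕜 X C hK hKc).trans (supDist_mono hA hK hC)

/-- The union `⋃_{j ≤ n} jK`. Taking the union over `j ≤ n`, rather than `nK` itself, makes the
family increasing in `n` without convexity assumptions on `K`. -/
def multiples {E : Type*} [NormedAddCommGroup E] (K : Set E) (n : ℕ) : Set E :=
  ⋃ j ∈ Set.Iic n, (fun x : E => j • x) '' K

theorem multiples_mono {E : Type*} [NormedAddCommGroup E] (K : Set E) : Monotone (multiples K) :=
  fun _ _ h => Set.biUnion_subset_biUnion_left (Set.Iic_subset_Iic.2 h)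

theorem smul_mem_multiples {E : Type*} [NormedAddCommGroup E] {K : Set E} {k : E} (hk : k ∈ K)
    (n : ℕ) : n • k ∈ multiples K n :=
  Set.mem_biUnion (Set.mem_Iic.2 le_rfl) ⟨k, hk, rfl⟩

theorem isWeaklyCompact_multiples {K : Set X} (hK : IsWeaklyCompact 𝕜 X K) (n : ℕ) :
    IsWeaklyCompact 𝕜 X (multiples K n) := by
  refine (Set.finite_Iic n).isCompact_biUnion (X := WeakSpace 𝕜 X) fun j _ => ?_
  exact IsCompact.image (X := WeakSpace 𝕜 X) (Y := WeakSpace 𝕜 X)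
    (f := fun x : WeakSpace 𝕜 X => j • x) hK (continuous_const_smul j)

theorem exists_infDist_multiples_le {K : Set X}
    (hK : ∀ L : Set X, IsWeaklyCompact 𝕜 X L → ∀ ε > (0 : ℝ),
      ∃ n : ℕ, ∀ x ∈ L, ∃ k ∈ K, ‖x - n • k‖ ≤ ε)
    {L : Set X} (hL : IsWeaklyCompact 𝕜 X L) {ε : ℝ} (hε : 0 < ε) :
    ∃ m : ℕ, ∀ x ∈ L, infDist x (multiples K m) ≤ ε := by
  obtain ⟨m, hm⟩ := hK L hL ε hε
  refine ⟨m, fun x hx => ?_⟩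
  obtain ⟨k, hk, hxk⟩ := hm x hx
  refine (infDist_le_dist_of_mem (smul_mem_multiples hk m)).trans ?_
  rwa [dist_eq_norm]

/-- The substantive form of the result: `C` is infinite whenever `A` is, so that the equality
`ω(C') = ω(A)` is not vacuous. Completeness of `X` plays no role. -/
theorem exists_countable_deBlasi_eq (hX : StronglyWCG 𝕜 X)
    (A : Set X) (hbdd : Bornology.IsBounded A) :
    ∃ C ⊆ A, C.Countable ∧ (A.Infinite → C.Infinite) ∧
      ∀ C' ⊆ C, C'.Infinite → deBlasiMWNC 𝕜 X C' = deBlasiMWNC 𝕜 X A := by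
  rcases A.finite_or_infinite with hfin | hinf
  · exact ⟨A, subset_rfl, hfin.countable, id, fun C' hC' h => absurd (hfin.subset hC') h⟩
  rcases (deBlasi_nonneg 𝕜 X A).eq_or_lt with h0 | hpos
  · obtain ⟨C, hCA, hCi, hCc⟩ : ∃ C ⊆ A, C.Infinite ∧ C.Countable := by
      refine ⟨Set.range fun n => (hinf.natEmbedding A n : X), ?_, ?_, Set.countable_range _⟩
      · rintro _ ⟨n, rfl⟩
        exact (hinf.natEmbedding A n).2
      · exact Set.infinite_range_of_injective
          (Subtype.val_injective.comp (hinf.natEmbedding A).injective)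
    refine ⟨C, hCA, hCc, fun _ => hCi, fun C' hC' _ => le_antisymm ?_ ?_⟩
    · exact deBlasi_mono 𝕜 X hbdd (hC'.trans hCA)
    · rw [← h0]
      exact deBlasi_nonneg 𝕜 X C'
  obtain ⟨K, hKc, hK⟩ := hX
  -- `K` is nonempty because the weakly compact set `{0}` is approximated by its multiples.
  have hKne : K.Nonempty := by
    obtain ⟨n, hn⟩ := hK {0} (isWeaklyCompact_of_finite 𝕜 X (Set.finite_singleton 0)) 1 one_pos
    obtain ⟨k, hk, -⟩ := hn 0 rfl
    exact ⟨k, hk⟩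
  have hMne : ∀ n, (multiples K n).Nonempty := fun n =>
    ⟨_, smul_mem_multiples hKne.some_mem n⟩
  set r := deBlasiMWNC 𝕜 X A with hr
  have : Nonempty A := hinf.nonempty.to_subtype
  have hex : ∀ n : ℕ, ∃ a : A, r - 1 / ((n : ℝ) + 1) < infDist (a : X) (multiples K n) := by
    intro n
    refine exists_lt_of_lt_ciSup (lt_of_lt_of_le ?_
      (deBlasi_le_supDist 𝕜 X A (hMne n) (isWeaklyCompact_multiples 𝕜 X hKc n)))
    have : (0 : ℝ) < 1 / ((n : ℝ) + 1) := by positivity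
    linarith
  choose a ha using hex
  have hfar : ∀ m : ℕ, ∀ δ > (0 : ℝ), ∃ N : ℕ, ∀ n > N,
      r - δ < infDist (a n : X) (multiples K m) := by
    intro m δ hδ
    obtain ⟨N, hN⟩ := exists_nat_one_div_lt hδ
    refine ⟨max m N, fun n hn => ?_⟩
    have h1 : infDist (a n : X) (multiples K n) ≤ infDist (a n : X) (multiples K m) :=
      infDist_le_infDist_of_subset
        (multiples_mono K ((le_max_left m N).trans hn.le)) (hMne m)
    have h2 : 1 / ((n : ℝ) + 1) ≤ 1 / ((N : ℝ) + 1) :=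
      Nat.one_div_le_one_div ((le_max_right m N).trans hn.le)
    have h3 := ha n
    linarith
  have hrA : (Set.range fun n => (a n : X)) ⊆ A := by
    rintro _ ⟨n, rfl⟩
    exact (a n).2
  refine ⟨Set.range fun n => (a n : X), hrA, Set.countable_range _, fun _ hF => ?_,
    fun C' hC' hCi => le_antisymm (deBlasi_mono 𝕜 X hbdd (hC'.trans hrA)) ?_⟩
  · obtain ⟨m, hm⟩ := exists_infDist_multiples_le 𝕜 X hK
      (isWeaklyCompact_of_finite 𝕜 X hF) (half_pos hpos)
    obtain ⟨N, hN⟩ := hfar m (r / 2) (half_pos hpos)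
    have h1 := hN (N + 1) N.lt_succ_self
    have h2 := hm _ ⟨N + 1, rfl⟩
    linarith
  · have hCb : Bornology.IsBounded C' := hbdd.subset (hC'.trans hrA)
    have hS : {n | (a n : X) ∈ C'}.Infinite := by
      refine Set.Infinite.of_image (fun n => (a n : X)) (hCi.mono fun x hx => ?_)
      obtain ⟨n, rfl⟩ := hC' hx
      exact ⟨n, hx, rfl⟩
    refine le_deBlasi 𝕜 X C' fun L hLne hLc => le_of_forall_pos_le_add fun ε hε => ?_
    obtain ⟨m, hm⟩ := exists_infDist_multiples_le 𝕜 X hK hLc (half_pos hε)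
    obtain ⟨N, hN⟩ := hfar m (ε / 2) (half_pos hε)
    obtain ⟨n, hnS, hn⟩ := hS.exists_gt N
    have h1 := hN n hn
    have h2 : infDist (a n : X) (multiples K m) - ε / 2 ≤ infDist (a n : X) L := by
      refine (le_infDist hLne).2 fun y hy => ?_
      have h3 := hm y hy
      have h4 : infDist (a n : X) (multiples K m) ≤ infDist y (multiples K m) + dist (a n : X) y :=
        infDist_le_infDist_add_dist
      linarith
    have h5 : infDist (a n : X) L ≤ supDist C' L := infDist_le_supDist hCb hLne hnS
    linarith

/-- in a strongly WCG Banach space, every bounded set `A` has a countable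
subset `C` with `ω(C') = ω(A)` for every infinite `C' ⊆ C`. -/
theorem stmt6 [CompleteSpace X] (hX : StronglyWCG 𝕜 X)
    (A : Set X) (hbdd : Bornology.IsBounded A) :
    ∃ C ⊆ A, C.Countable ∧
      ∀ C' ⊆ C, C'.Infinite → deBlasiMWNC 𝕜 X C' = deBlasiMWNC 𝕜 X A := by
  obtain ⟨C, hCA, hCc, -, hC⟩ := exists_countable_deBlasi_eq 𝕜 X hX A hbdd
  exact ⟨C, hCA, hCc, hC⟩
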